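/- Let S = ⟨a_1, a_2, a_3⟩ be a numerical semigroup with three minimal generators. If S admits at most one expression as a gluing, then Δ_0(S) = {1, 2}; if S admits at least two distinct expressions as a gluing, then Δ_0(S) = {1}. -/

import Mathlib

open Finset

/-- `Zfac a x`: the set of factorizations of `x` with respect to the generators `a`. -/
def Zfac {k : ℕ} (a : Fin k → ℕ) (x : ℕ) : Set (Fin k → ℕ) :=
  {z | ∑ j, z j * a j = x}

/-- The `∞`-length of a factorization: the maximum coordinate. -/
def linf {k : ℕ} (z : Fin k → ℕ) : ℕ :=
  Finset.univ.sup z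

/-- The `0`-length of a factorization: the size of its support. -/
def lzero {k : ℕ} (z : Fin k → ℕ) : ℕ :=
  (Finset.univ.filter fun i => z i ≠ 0).card

/-- `𝓛∞(x)`: the set of `∞`-lengths of factorizations of `x`. -/
def LinfSet {k : ℕ} (a : Fin k → ℕ) (x : ℕ) : Set ℕ :=
  linf '' Zfac a x

/-- `𝓛∞(x, i)`: `∞`-lengths of factorizations whose maximum coordinate is attained at `i`. -/
def LinfSetI {k : ℕ} (a : Fin k → ℕ) (x : ℕ) (i : Fin k) : Set ℕ :=
  linf '' {z | z ∈ Zfac a x ∧ z i = linf z}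

/-- `𝓛₀(x)`: the set of `0`-lengths of factorizations of `x`. -/
def LzeroSet {k : ℕ} (a : Fin k → ℕ) (x : ℕ) : Set ℕ :=
  lzero '' Zfac a x

/-- The set of differences between consecutive elements of a set `T ⊆ ℕ`. -/
def deltaSet (T : Set ℕ) : Set ℕ :=
  {d | ∃ u ∈ T, ∃ v ∈ T, u < v ∧ v - u = d ∧ ∀ t ∈ T, ¬(u < t ∧ t < v)}

/-- `Δ∞(x)`. -/
def DeltaInf {k : ℕ} (a : Fin k → ℕ) (x : ℕ) : Set ℕ := deltaSet (LinfSet a x)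

/-- `Δ∞(S) = ⋃ x ∈ S, Δ∞(x)` (for `x ∉ S` the contribution is empty). -/
def DeltaInfS {k : ℕ} (a : Fin k → ℕ) : Set ℕ := ⋃ x : ℕ, DeltaInf a x

/-- `Δ₀(x)`. -/
def DeltaZero {k : ℕ} (a : Fin k → ℕ) (x : ℕ) : Set ℕ := deltaSet (LzeroSet a x)

/-- `Δ₀(S) = ⋃ x ∈ S, Δ₀(x)` (for `x ∉ S` the contribution is empty). -/
def DeltaZeroS {k : ℕ} (a : Fin k → ℕ) : Set ℕ := ⋃ x : ℕ, DeltaZero a x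

/-- `a` is a system of minimal generators: no generator is a `ℕ`-combination of the others. -/
def MinimalGens {k : ℕ} (a : Fin k → ℕ) : Prop :=
  ∀ i : Fin k, ¬ ∃ z : Fin k → ℕ, z i = 0 ∧ ∑ j, z j * a j = a i

/-- `S = ⟨a₁, a₂, a₃⟩` admits an expression as a gluing whose singleton part is the `i`-th
generator: `S = t'S' + t''S''` with `S'' = ⟨c⟩`, `a i = t''·c`, `S' = ⟨b j : j ≠ i⟩`,
`a j = t'·b j` for `j ≠ i`, `t' ∈ S'' ∖ {c}`, `t'' ∈ S' ∖ {b j : j ≠ i}`, and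
`gcd(t', t'') = 1`. -/
def IsGluingAt (a : Fin 3 → ℕ) (i : Fin 3) : Prop :=
  ∃ (t' t'' c : ℕ) (b : Fin 3 → ℕ),
    a i = t'' * c ∧
    (∀ j, j ≠ i → a j = t' * b j) ∧
    (∃ n : ℕ, t' = n * c) ∧ t' ≠ c ∧
    (∃ z : Fin 3 → ℕ, z i = 0 ∧ t'' = ∑ j, z j * b j) ∧
    (∀ j, j ≠ i → t'' ≠ b j) ∧
    Nat.gcd t' t'' = 1

/-!
Let `c i` be the least `c > 0` such that `c * a i` is generated by the other two generators.

If `S` is a gluing at no more than one index, then for some `i` neither of the other generators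
divides `c i * a i`: where `a j` does, `S` is a gluing at the third index, by Bézout with the
coefficient of `a i` reduced below `c i`. Among all such `i`, take one with `(c i + 1) * a i`
smallest. This element has factorizations of `0`-length 1 and 3. One of `0`-length 2 would avoid
`a i`, and comparing it with a factorization of `c i * a i` would yield an index with a smaller
value. Hence 2 lies in `Δ₀(S)`.

If `S` is a gluing at `i` and at `j`, consider an element with factorizations of `0`-length 1 and 3,
the former supported at `t`. Choose `m ∈ {i, j}` other than `t`. Then `gcdOthers a m` divides the
element, hence also the coefficient of `a m` in the long factorization, and trading `a m` for the
other generators leaves `0`-length 2. Hence 2 does not lie in `Δ₀(S)`.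
-/

section General

variable {k : ℕ} {a : Fin k → ℕ} {i j : Fin k} {x y n : ℕ} {z w : Fin k → ℕ}

theorem MinimalGens.pos (hmin : MinimalGens a) (i : Fin k) : 0 < a i :=
  Nat.pos_of_ne_zero fun h => hmin i ⟨0, rfl, by simp [h]⟩

theorem mem_Zfac : z ∈ Zfac a x ↔ ∑ j, z j * a j = x := Iff.rfl

theorem add_mem_Zfac (hz : z ∈ Zfac a x) (hw : w ∈ Zfac a y) : z + w ∈ Zfac a (x + y) := by
  rw [mem_Zfac] at hz hw ⊢
  simp only [Pi.add_apply, add_mul, sum_add_distrib, hz, hw]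

theorem smul_mem_Zfac (n : ℕ) (hz : z ∈ Zfac a x) : n • z ∈ Zfac a (n * x) := by
  rw [mem_Zfac] at hz ⊢
  simp only [Pi.smul_apply, smul_eq_mul, mul_assoc, ← mul_sum, hz]

theorem sub_mem_Zfac (hwz : w ≤ z) (hz : z ∈ Zfac a x) (hw : w ∈ Zfac a y) :
    z - w ∈ Zfac a (x - y) := by
  rw [mem_Zfac] at hz hw ⊢
  simp only [Pi.sub_apply, Nat.sub_mul]
  rw [sum_tsub_distrib _ fun j _ => Nat.mul_le_mul_right _ (hwz j), hz, hw]

theorem single_mem_Zfac (a : Fin k → ℕ) (i : Fin k) (n : ℕ) :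
    Pi.single i n ∈ Zfac a (n * a i) := by
  simp [mem_Zfac, Pi.single_apply]

theorem mul_le_of_mem_Zfac (hz : z ∈ Zfac a x) (i : Fin k) : z i * a i ≤ x :=
  hz ▸ single_le_sum (f := fun j => z j * a j) (fun _ _ => Nat.zero_le _) (mem_univ i)

theorem eq_zero_of_mem_Zfac_zero (hpos : ∀ i, 0 < a i) (hz : z ∈ Zfac a 0) : z = 0 := by
  funext i
  simpa [(hpos i).ne'] using mul_le_of_mem_Zfac hz i

theorem update_zero_mem_Zfac (hz : z ∈ Zfac a x) (i : Fin k) :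
    Function.update z i 0 ∈ Zfac a (x - z i * a i) := by
  have hle : Pi.single i (z i) ≤ z := by
    intro j
    obtain rfl | hji := eq_or_ne j i <;> simp [*]
  convert sub_mem_Zfac hle hz (single_mem_Zfac a i (z i)) using 1
  funext j
  obtain rfl | hji := eq_or_ne j i <;> simp [*]

theorem MinimalGens.exists_ne_lt (hmin : MinimalGens a) (hz : z ∈ Zfac a (n * a i))
    (hw : w ∈ Zfac a ((n + 1) * a i)) (hzi : z i = 0) (hwi : w i = 0) : ∃ j ≠ i, w j < z j := by
  by_contra! hle
  refine hmin i ⟨w - z, by simp [hwi], ?_⟩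
  convert mem_Zfac.1 (sub_mem_Zfac (fun j => ?_) hw hz) using 1
  · rw [← Nat.sub_mul, Nat.add_sub_cancel_left, one_mul]
  · obtain rfl | hji := eq_or_ne j i
    · simp [hzi]
    · exact hle j hji

theorem lzero_le (z : Fin k → ℕ) : lzero z ≤ k :=
  (card_le_univ _).trans_eq (Fintype.card_fin k)

theorem lzero_eq_zero_iff : lzero z = 0 ↔ z = 0 := by
  simp [lzero, filter_eq_empty_iff, funext_iff]

theorem lzero_eq_one_iff : lzero z = 1 ↔ ∃ i, z i ≠ 0 ∧ ∀ j ≠ i, z j = 0 := by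
  simp only [lzero, card_eq_one, Finset.ext_iff, mem_filter, mem_univ, true_and, mem_singleton]
  refine exists_congr fun i => ⟨fun h => ⟨(h i).2 rfl, fun j hj => ?_⟩, fun h j => ⟨?_, ?_⟩⟩
  · exact not_not.1 (mt (h j).1 hj)
  · exact fun hzj => not_not.1 (mt (h.2 j) hzj)
  · rintro rfl
    exact h.1

theorem lzero_eq_card_iff : lzero z = k ↔ ∀ i, z i ≠ 0 := by
  simpa [lzero] using card_filter_eq_iff (s := univ) (p := fun i => z i ≠ 0)

theorem lzero_eq_pred_iff_of_eq_zero (hz : z i = 0) :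
    lzero z = k - 1 ↔ ∀ j ≠ i, z j ≠ 0 := by
  have hfilter : (univ.filter fun j => z j ≠ 0) = (univ.erase i).filter fun j => z j ≠ 0 := by
    ext j
    simp only [mem_filter, mem_erase, mem_univ, true_and, and_true]
    exact ⟨fun h => ⟨fun hji => h (hji ▸ hz), h⟩, And.right⟩
  have hcard : #(univ.erase i) = k - 1 := by simp
  rw [lzero, hfilter, ← hcard, card_filter_eq_iff]
  simp

theorem pos_of_mem_LzeroSet_of_lt {u v : ℕ} (hpos : ∀ i, 0 < a i) (hu : u ∈ LzeroSet a x)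
    (hv : v ∈ LzeroSet a x) (huv : u < v) : 0 < u := by
  obtain ⟨z, hz, rfl⟩ := hu
  obtain ⟨w, hw, rfl⟩ := hv
  by_contra! hu0
  obtain rfl := lzero_eq_zero_iff.1 (Nat.le_zero.1 hu0)
  obtain rfl : x = 0 := by simpa [Zfac] using hz.symm
  exact huv.ne (congrArg lzero (eq_zero_of_mem_Zfac_zero hpos hw).symm)

theorem le_of_mem_LzeroSet {v : ℕ} (hv : v ∈ LzeroSet a x) : v ≤ k := by
  obtain ⟨z, -, rfl⟩ := hv
  exact lzero_le z

theorem DeltaZeroS_subset_Ioo (hpos : ∀ i, 0 < a i) : DeltaZeroS a ⊆ Set.Ioo 0 k := by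
  rintro d hd
  obtain ⟨x, u, hu, v, hv, huv, rfl, -⟩ := Set.mem_iUnion.1 hd
  have := pos_of_mem_LzeroSet_of_lt hpos hu hv huv
  have := le_of_mem_LzeroSet hv
  exact ⟨by omega, by omega⟩

theorem one_mem_DeltaZeroS (hij : i ≠ j) (hi : 0 < a i) (hj : 0 < a j) :
    1 ∈ DeltaZeroS a := by
  refine Set.mem_iUnion.2 ⟨2 * a j * a i, 1, ⟨Pi.single i (2 * a j), single_mem_Zfac .., ?_⟩,
    2, ⟨Pi.single i (a j) + Pi.single j (a i), ?_, ?_⟩, by norm_num, rfl, by omega⟩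
  · exact lzero_eq_one_iff.2 ⟨i, by simp [hj.ne'], fun t ht => by simp [ht]⟩
  · convert add_mem_Zfac (single_mem_Zfac a i (a j)) (single_mem_Zfac a j (a i)) using 2
    ring
  · rw [lzero, card_eq_two]
    refine ⟨i, j, hij, ?_⟩
    ext t
    simp [Pi.single_apply, hi.ne', hj.ne', or_iff_not_imp_left]

/-- The elements of the subsemigroup generated by the generators other than `a i`. The condition
has the shape used in `MinimalGens`, so that `MinimalGens a` unfolds to
`∀ i, a i ∉ spanOthers a i`. -/
def spanOthers (a : Fin k → ℕ) (i : Fin k) : Set ℕ :=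
  {x | ∃ z : Fin k → ℕ, z i = 0 ∧ ∑ j, z j * a j = x}

/-- The greatest common divisor of the generators other than `a i`. If `S` is a gluing with
singleton part `a i`, this is the multiplier `t'` of the other part. -/
def gcdOthers (a : Fin k → ℕ) (i : Fin k) : ℕ := (univ.erase i).gcd a

/-- The least `c > 0` for which `c * a i` lies in the subsemigroup generated by the other
generators (denoted `c_i` in the theory of critical binomials). If one of these is positive then
such a `c` exists; where none exists, the value is `sInf ∅ = 0`. -/
noncomputable def criticalMultiplier (a : Fin k → ℕ) (i : Fin k) : ℕ :=
  sInf {c | 0 < c ∧ c * a i ∈ spanOthers a i}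

/-- No other generator divides the critical multiple of `a i`. For three generators this means that
every relation expressing that multiple by the other generators involves both of them. -/
def CriticalIndivisible (a : Fin k → ℕ) (i : Fin k) : Prop :=
  ∀ j ≠ i, ¬ a j ∣ criticalMultiplier a i * a i

theorem mul_mem_spanOthers (hji : j ≠ i) (n : ℕ) : n * a j ∈ spanOthers a i :=
  ⟨Pi.single j n, by simp [hji.symm], single_mem_Zfac a j n⟩

theorem gcdOthers_dvd (hji : j ≠ i) : gcdOthers a i ∣ a j :=
  gcd_dvd (mem_erase.2 ⟨hji, mem_univ j⟩)

theorem coprime_gcdOthers (hgcd : univ.gcd a = 1) (i : Fin k) :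
    (gcdOthers a i).Coprime (a i) := by
  rw [← insert_erase (mem_univ i), gcd_insert] at hgcd
  exact Nat.coprime_comm.1 hgcd

theorem criticalMultiplier_spec (hji : j ≠ i) (hj : 0 < a j) :
    0 < criticalMultiplier a i ∧ criticalMultiplier a i * a i ∈ spanOthers a i :=
  Nat.sInf_mem (s := {c | 0 < c ∧ c * a i ∈ spanOthers a i})
    ⟨a j, hj, mul_comm (a j) (a i) ▸ mul_mem_spanOthers hji (a i)⟩

theorem criticalMultiplier_le (hn : 0 < n) (h : n * a i ∈ spanOthers a i) :
    criticalMultiplier a i ≤ n :=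
  Nat.sInf_le ⟨hn, h⟩

theorem eq_zero_of_mem_Zfac_criticalMultiplier_mul (hpos : ∀ i, 0 < a i)
    (hz : z ∈ Zfac a (criticalMultiplier a i * a i)) (hzi : 0 < z i) (hji : j ≠ i) :
    z j = 0 := by
  have hupdate := update_zero_mem_Zfac hz i
  rw [← Nat.sub_mul] at hupdate
  have hsub : criticalMultiplier a i - z i = 0 := by
    by_contra hne
    have := criticalMultiplier_le (Nat.pos_of_ne_zero hne) ⟨_, Function.update_self .., hupdate⟩
    omega
  rw [hsub, zero_mul] at hupdate
  simpa [hji] using congrFun (eq_zero_of_mem_Zfac_zero hpos hupdate) j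

-- `gcdOthers a i` divides the coefficient of `a i`, so that term can be rewritten by the gluing
-- relation in terms of the other generators.
theorem pred_mem_LzeroSet_of_dvd (hgcd : univ.gcd a = 1)
    (hi : gcdOthers a i * a i ∈ spanOthers a i) (hx : gcdOthers a i ∣ x)
    (hz : z ∈ Zfac a x) (hsupp : ∀ j, z j ≠ 0) : k - 1 ∈ LzeroSet a x := by
  obtain ⟨w, hwi, hw⟩ := hi
  have hrest := update_zero_mem_Zfac hz i
  have hdvd_rest : gcdOthers a i ∣ x - z i * a i := by
    rw [← mem_Zfac.1 hrest]
    refine dvd_sum fun j _ => ?_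
    obtain rfl | hji := eq_or_ne j i
    · simp
    · exact (gcdOthers_dvd hji).mul_left _
  have hle := mul_le_of_mem_Zfac hz i
  have hdvd : gcdOthers a i ∣ z i := by
    refine (coprime_gcdOthers hgcd i).dvd_of_dvd_mul_right ?_
    rwa [Nat.dvd_sub_iff_right hle hx] at hdvd_rest
  obtain ⟨m, hm⟩ := hdvd
  refine ⟨Function.update z i 0 + m • w, ?_, ?_⟩
  · convert add_mem_Zfac hrest (smul_mem_Zfac m hw) using 1
    rw [← mul_assoc, mul_comm m, ← hm, Nat.sub_add_cancel hle]
  · refine (lzero_eq_pred_iff_of_eq_zero (i := i) (by simp [hwi])).2 fun j hji => ?_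
    simp [hji, hsupp j]

theorem pred_notMem_DeltaZeroS (hk : 2 < k) (hpos : ∀ i, 0 < a i) (hgcd : univ.gcd a = 1)
    (hij : i ≠ j) (hi : gcdOthers a i * a i ∈ spanOthers a i)
    (hj : gcdOthers a j * a j ∈ spanOthers a j) : k - 1 ∉ DeltaZeroS a := by
  intro hmem
  obtain ⟨x, u, hu, v, hv, huv, hdiff, hgap⟩ := Set.mem_iUnion.1 hmem
  have hu_pos := pos_of_mem_LzeroSet_of_lt hpos hu hv huv
  have hv_le := le_of_mem_LzeroSet hv
  obtain ⟨z, hz, rfl⟩ := hu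
  obtain ⟨w, hw, rfl⟩ := hv
  obtain ⟨t, -, ht⟩ := lzero_eq_one_iff.1 (show lzero z = 1 by omega)
  have hw_supp := lzero_eq_card_iff.1 (show lzero w = k by omega)
  have hx : a t ∣ x := by
    rw [← mem_Zfac.1 hz, sum_eq_single t (fun j _ hj => by simp [ht j hj]) (by simp)]
    exact dvd_mul_left _ _
  have hpred : k - 1 ∈ LzeroSet a x := by
    obtain hti | rfl := ne_or_eq t i
    · exact pred_mem_LzeroSet_of_dvd hgcd hi ((gcdOthers_dvd hti).trans hx) hw hw_supp
    · exact pred_mem_LzeroSet_of_dvd hgcd hj ((gcdOthers_dvd hij).trans hx) hw hw_supp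
  exact hgap (k - 1) hpred (by omega)

end General

section ThreeGenerators

variable {a : Fin 3 → ℕ} {i j l : Fin 3} {x : ℕ}

theorem IsGluingAt.gcdOthers_mul_mem_spanOthers (hgcd : univ.gcd a = 1) (h : IsGluingAt a i) :
    gcdOthers a i * a i ∈ spanOthers a i := by
  obtain ⟨t', t'', c, b, hi, hb, ⟨n, rfl⟩, -, ⟨z, hzi, hz⟩, -, -⟩ := h
  obtain rfl : c = 1 := by
    rw [← Nat.dvd_one, ← hgcd]
    refine dvd_gcd fun j _ => ?_
    obtain rfl | hji := eq_or_ne j i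
    · exact ⟨t'', by rw [hi, mul_comm]⟩
    · exact ⟨n * b j, by rw [hb j hji]; ring⟩
  obtain ⟨m, hm⟩ : n ∣ gcdOthers a i :=
    dvd_gcd fun j hj => ⟨b j, by rw [hb j (ne_of_mem_erase hj), mul_one]⟩
  refine ⟨m • z, by simp [hzi], ?_⟩
  rw [hm, hi, hz, mul_one, mul_sum]
  refine sum_congr rfl fun j _ => ?_
  obtain rfl | hji := eq_or_ne j i
  · simp [hzi]
  · rw [hb j hji, Pi.smul_apply, smul_eq_mul]
    ring

theorem isGluingAt_of_gcdOthers_mul_mem_spanOthers (hgcd : univ.gcd a = 1)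
    (hmin : MinimalGens a) (hi : gcdOthers a i * a i ∈ spanOthers a i) : IsGluingAt a i := by
  have hdiv : ∀ j ≠ i, a j = gcdOthers a i * (a j / gcdOthers a i) := fun j hji =>
    (Nat.mul_div_cancel' (gcdOthers_dvd hji)).symm
  have hgcd_pos : 0 < gcdOthers a i := by
    obtain ⟨j, hji⟩ := exists_ne i
    exact Nat.pos_of_dvd_of_pos (gcdOthers_dvd hji) (hmin.pos j)
  have hgcd_ne_one : gcdOthers a i ≠ 1 := fun h => hmin i (by rwa [h, one_mul] at hi)
  have hdiv_ne : ∀ j ≠ i, a i ≠ a j / gcdOthers a i := fun j hji h => by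
    have hmem := mul_mem_spanOthers (a := a) hji.symm (gcdOthers a i)
    rw [h, ← hdiv j hji] at hmem
    exact hmin j hmem
  obtain ⟨z, hzi, hz⟩ := hi
  refine ⟨gcdOthers a i, a i, 1, fun j => a j / gcdOthers a i, (mul_one _).symm, hdiv,
    ⟨_, (mul_one _).symm⟩, hgcd_ne_one, ⟨z, hzi, ?_⟩, hdiv_ne, coprime_gcdOthers hgcd i⟩
  refine Nat.eq_of_mul_eq_mul_left hgcd_pos ?_
  rw [← hz, mul_sum]
  refine sum_congr rfl fun j _ => ?_
  obtain rfl | hji := eq_or_ne j i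
  · simp [hzi]
  · rw [mul_left_comm, ← hdiv j hji]

theorem exists_third (hij : i ≠ j) : ∃ l, i ≠ l ∧ j ≠ l := by
  decide +revert

theorem univ_eq_triple (hij : i ≠ j) (hil : i ≠ l) (hjl : j ≠ l) :
    (univ : Finset (Fin 3)) = {i, j, l} := by
  decide +revert

theorem eq_third {m : Fin 3} (hij : i ≠ j) (hil : i ≠ l) (hjl : j ≠ l) (hmi : m ≠ i)
    (hmj : m ≠ j) : m = l := by
  have hm := mem_univ m
  rw [univ_eq_triple hij hil hjl] at hm
  simpa [hmi, hmj] using hm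

theorem sum_eq_add_add (hij : i ≠ j) (hil : i ≠ l) (hjl : j ≠ l) (f : Fin 3 → ℕ) :
    ∑ t, f t = f i + f j + f l := by
  rw [univ_eq_triple hij hil hjl, sum_insert (by simp [hij, hil]), sum_pair hjl, add_assoc]

theorem mem_spanOthers_iff (hij : i ≠ j) (hil : i ≠ l) (hjl : j ≠ l) :
    x ∈ spanOthers a i ↔ ∃ y z, y * a j + z * a l = x := by
  constructor
  · rintro ⟨z, hzi, rfl⟩
    exact ⟨z j, z l, by simp [sum_eq_add_add hij hil hjl, hzi]⟩
  · rintro ⟨y, z, rfl⟩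
    exact ⟨Pi.single j y + Pi.single l z, by simp [hij, hil],
      add_mem_Zfac (single_mem_Zfac a j y) (single_mem_Zfac a l z)⟩

theorem gcdOthers_eq_gcd (hij : i ≠ j) (hil : i ≠ l) (hjl : j ≠ l) :
    gcdOthers a i = (a j).gcd (a l) := by
  have herase : univ.erase i = {j, l} := by
    rw [univ_eq_triple hij hil hjl, erase_insert (by simp [hij, hil])]
  rw [gcdOthers, herase, gcd_insert, gcd_singleton, normalize_eq]
  rfl

theorem exists_lt_mul_add_mul_eq_gcd_mul {A B c v : ℕ} (hc : 0 < c) (h : c * A = B * v) (C : ℕ) :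
    ∃ (p : ℕ) (q : ℤ), p < c ∧ (p * A + q * B : ℤ) = A.gcd B * C := by
  have hmod := Int.emod_add_mul_ediv (C * A.gcdA B) c
  have hmod_nonneg : 0 ≤ C * A.gcdA B % c := Int.emod_nonneg _ (by exact_mod_cast hc.ne')
  have hmod_lt : C * A.gcdA B % c < c := Int.emod_lt_of_pos _ (by exact_mod_cast hc)
  refine ⟨(C * A.gcdA B % c).toNat, C * A.gcdB B + C * A.gcdA B / c * v, by omega, ?_⟩
  rw [Int.toNat_of_nonneg hmod_nonneg, Nat.gcd_eq_gcd_ab]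
  zify at h
  linear_combination (A : ℤ) * hmod - (C * A.gcdA B / c) * h

-- The multiple of `a l` is an integer combination of `a i` and `a j` whose coefficient of `a i` is
-- reduced below the critical multiplier, so that the coefficient of `a j` cannot be negative.
theorem gcdOthers_mul_mem_spanOthers_of_dvd_critical (hpos : ∀ i, 0 < a i) (hij : i ≠ j)
    (hil : i ≠ l) (hjl : j ≠ l) (hdvd : a j ∣ criticalMultiplier a i * a i) :
    gcdOthers a l * a l ∈ spanOthers a l := by
  rw [gcdOthers_eq_gcd hil.symm hjl.symm hij]
  obtain ⟨v, hv⟩ := hdvd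
  obtain ⟨p, q, hp_lt, hrel⟩ := exists_lt_mul_add_mul_eq_gcd_mul
    (criticalMultiplier_spec hij.symm (hpos j)).1 hv (a l)
  obtain ⟨n, rfl | rfl⟩ := q.eq_nat_or_neg
  · exact (mem_spanOthers_iff hil.symm hjl.symm hij).2 ⟨p, n, by exact_mod_cast hrel⟩
  · have hrel' : n * a j + (a i).gcd (a j) * a l = p * a i := by
      zify
      linear_combination -hrel
    rcases Nat.eq_zero_or_pos p with rfl | hp
    · simp [(hpos i).ne', (hpos j).ne', (hpos l).ne'] at hrel'
    · have hle := criticalMultiplier_le hp ((mem_spanOthers_iff hij hil hjl).2 ⟨_, _, hrel'⟩)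
      exact absurd hp_lt hle.not_gt

theorem exists_isGluingAt_of_not_criticalIndivisible (hgcd : univ.gcd a = 1)
    (hmin : MinimalGens a) (hi : ¬ CriticalIndivisible a i) : ∃ l ≠ i, IsGluingAt a l := by
  simp only [CriticalIndivisible, not_forall, not_not] at hi
  obtain ⟨j, hji, hdvd⟩ := hi
  obtain ⟨l, hjl, hil⟩ := exists_third hji
  exact ⟨l, hil.symm, isGluingAt_of_gcdOthers_mul_mem_spanOthers hgcd hmin <|
    gcdOthers_mul_mem_spanOthers_of_dvd_critical hmin.pos hji.symm hil hjl hdvd⟩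

theorem exists_criticalIndivisible (hgcd : univ.gcd a = 1) (hmin : MinimalGens a)
    (hunique : ∀ i j : Fin 3, IsGluingAt a i → IsGluingAt a j → i = j) :
    ∃ i, CriticalIndivisible a i := by
  by_contra! hnone
  obtain ⟨i, -, hi⟩ := exists_isGluingAt_of_not_criticalIndivisible hgcd hmin (hnone 0)
  obtain ⟨j, hji, hj⟩ := exists_isGluingAt_of_not_criticalIndivisible hgcd hmin (hnone i)
  exact hji (hunique j i hj hi)

theorem CriticalIndivisible.ne_zero {z : Fin 3 → ℕ} (hi : CriticalIndivisible a i)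
    (hz : z ∈ Zfac a (criticalMultiplier a i * a i)) (hzi : z i = 0) (hji : j ≠ i) :
    z j ≠ 0 := by
  intro hzj
  obtain ⟨l, hjl, hil⟩ := exists_third hji
  refine hi l hil.symm ⟨z l, ?_⟩
  rw [← mem_Zfac.1 hz, sum_eq_add_add hji.symm hil hjl, hzi, hzj]
  ring

theorem CriticalIndivisible.lzero_eq_one_or_three {w : Fin 3 → ℕ} (hpos : ∀ i, 0 < a i)
    (hi : CriticalIndivisible a i) (hw : w ∈ Zfac a ((criticalMultiplier a i + 1) * a i))
    (hwi : w i ≠ 0) : lzero w = 1 ∨ lzero w = 3 := by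
  obtain ⟨z, rfl⟩ : ∃ z, w = z + Pi.single i 1 := by
    refine ⟨w - Pi.single i 1, (tsub_add_cancel_of_le fun t => ?_).symm⟩
    obtain rfl | hti := eq_or_ne t i
    · simpa using Nat.one_le_iff_ne_zero.2 hwi
    · simp [hti]
  have hz : z ∈ Zfac a (criticalMultiplier a i * a i) := by
    convert sub_mem_Zfac le_add_self hw (single_mem_Zfac a i 1) using 1
    · rw [← Nat.sub_mul, Nat.add_sub_cancel]
    · simp
  rcases Nat.eq_zero_or_pos (z i) with hzi | hzi
  · refine .inr (lzero_eq_card_iff.2 fun t => ?_)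
    obtain rfl | hti := eq_or_ne t i
    · exact hwi
    · simpa [hti] using hi.ne_zero hz hzi hti
  · refine .inl (lzero_eq_one_iff.2 ⟨i, hwi, fun t hti => ?_⟩)
    simpa [hti] using eq_zero_of_mem_Zfac_criticalMultiplier_mul hpos hz hzi hti

theorem two_mem_DeltaZeroS_of_criticalIndivisible (hpos : ∀ i, 0 < a i)
    (hi : CriticalIndivisible a i)
    (hno : ∀ w ∈ Zfac a ((criticalMultiplier a i + 1) * a i), w i = 0 → ∃ j ≠ i, w j = 0) :
    2 ∈ DeltaZeroS a := by
  obtain ⟨j, hji⟩ := exists_ne i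
  obtain ⟨-, z, hzi, hz⟩ := criticalMultiplier_spec hji (hpos j)
  refine Set.mem_iUnion.2 ⟨(criticalMultiplier a i + 1) * a i, 1,
    ⟨_, single_mem_Zfac a i _, lzero_eq_one_iff.2 ⟨i, by simp, fun t ht => by simp [ht]⟩⟩, 3,
    ⟨z + Pi.single i 1, ?_, lzero_eq_card_iff.2 fun t => ?_⟩, by norm_num, rfl, ?_⟩
  · rw [add_mul]
    exact add_mem_Zfac hz (single_mem_Zfac a i 1)
  · obtain rfl | hti := eq_or_ne t i
    · simp
    · simp [hti, hi.ne_zero hz hzi hti]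
  · rintro _ ⟨w, hw, rfl⟩ ⟨hlt, hlt'⟩
    by_cases hwi : w i = 0
    · obtain ⟨t, hti, hwt⟩ := hno w hw hwi
      exact (lzero_eq_pred_iff_of_eq_zero hwi).1 (by omega) t hti hwt
    · have := hi.lzero_eq_one_or_three hpos hw hwi
      omega

-- With `t` reduced modulo the critical multiplier of `a l`, the relation contradicts either the
-- minimality of that multiplier or that of the generator `a i`.
theorem add_mul_ne_mul_of_dvd_critical (hmin : MinimalGens a) (hij : i ≠ j) (hil : i ≠ l)
    (hjl : j ≠ l) (hdvd : a j ∣ criticalMultiplier a l * a l) (s t : ℕ) :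
    a i + s * a j ≠ t * a l := by
  intro h
  obtain ⟨u, hu⟩ := hdvd
  have hc_pos := (criticalMultiplier_spec hjl (hmin.pos j)).1
  set c := criticalMultiplier a l
  have hreduced : a i + s * a j = t / c * u * a j + t % c * a l := by
    rw [h]
    nth_rw 1 [← Nat.mod_add_div t c]
    linear_combination (t / c) * hu
  rcases le_or_gt (t / c * u) s with hle | hlt
  · have hrel : 1 * a i + (s - t / c * u) * a j = t % c * a l := by
      rw [Nat.sub_mul]
      have := Nat.mul_le_mul_right (a j) hle
      omega
    have hmod_pos : 0 < t % c := Nat.pos_of_ne_zero fun h0 => by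
      have := hmin.pos i
      rw [h0] at hrel
      omega
    have hle_mod := criticalMultiplier_le hmod_pos
      ((mem_spanOthers_iff hil.symm hjl.symm hij).2 ⟨1, _, hrel⟩)
    exact (Nat.mod_lt t hc_pos).not_ge hle_mod
  · refine hmin i ((mem_spanOthers_iff hij hil hjl).2 ⟨t / c * u - s, t % c, ?_⟩)
    rw [Nat.sub_mul]
    have := Nat.mul_le_mul_right (a j) hlt.le
    omega

-- Substituting the relation for `a j` into `hcrit` gives a relation for the critical multiple of
-- `a i` that contains `e` times `a i` and still a positive multiple of `a j`.
theorem eq_zero_of_critical_relations {p q e f : ℕ} (hpos : ∀ i, 0 < a i) (hij : i ≠ j)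
    (hil : i ≠ l) (hjl : j ≠ l) (hcrit : q * a j + p * a l = criticalMultiplier a i * a i)
    (hjq : criticalMultiplier a j < q)
    (hrel : e * a i + f * a l = criticalMultiplier a j * a j) : e = 0 := by
  by_contra he
  have hz := add_mem_Zfac (add_mem_Zfac (single_mem_Zfac a i e)
    (single_mem_Zfac a j (q - criticalMultiplier a j))) (single_mem_Zfac a l (p + f))
  rw [show _ + _ = criticalMultiplier a i * a i by
    zify [hjq.le] at hcrit hrel ⊢
    linear_combination hcrit + hrel] at hz
  have hzj := eq_zero_of_mem_Zfac_criticalMultiplier_mul hpos hz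
    (by simpa [hij, hil] using Nat.pos_of_ne_zero he) hij.symm
  simp only [Pi.add_apply, Pi.single_eq_same, Pi.single_eq_of_ne hij.symm,
    Pi.single_eq_of_ne hjl] at hzj
  omega

theorem criticalIndivisible_of_dvd_critical {p q s t : ℕ} (hpos : ∀ i, 0 < a i) (hij : i ≠ j)
    (hil : i ≠ l) (hjl : j ≠ l) (hcrit : q * a j + p * a l = criticalMultiplier a i * a i)
    (hs : 0 < s) (hsq : s < q) (hrel : a i + s * a j = t * a l)
    (hdvd : a i ∣ criticalMultiplier a l * a l) :
    CriticalIndivisible a j ∧ criticalMultiplier a j ≤ s := by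
  obtain ⟨u, hu⟩ := hdvd
  have hu_pos : 0 < u := by
    have := Nat.mul_pos (criticalMultiplier_spec hil (hpos i)).1 (hpos l)
    exact Nat.pos_of_mul_pos_left (hu ▸ this)
  have ht_pos : 0 < t := Nat.pos_of_ne_zero fun h0 => by
    have := hpos i
    rw [h0] at hrel
    omega
  have hl_le : criticalMultiplier a l ≤ t := criticalMultiplier_le ht_pos
    ((mem_spanOthers_iff hil.symm hjl.symm hij).2 ⟨1, s, by rw [one_mul, hrel]⟩)
  have hj_le : criticalMultiplier a j ≤ s := by
    refine criticalMultiplier_le hs ((mem_spanOthers_iff hij.symm hjl hil).2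
      ⟨u - 1, t - criticalMultiplier a l, ?_⟩)
    zify [hu_pos, hl_le] at hu hrel ⊢
    linear_combination -hu - hrel
  have hj_lt := hj_le.trans_lt hsq
  refine ⟨fun m hmj hm => ?_, hj_le⟩
  have hj_crit_pos := Nat.mul_pos (criticalMultiplier_spec hij (hpos i)).1 (hpos j)
  obtain ⟨v, hv⟩ := hm
  have hv_pos : 0 < v := Nat.pos_of_mul_pos_left (hv ▸ hj_crit_pos)
  obtain rfl | hmi := eq_or_ne m i
  · exact hv_pos.ne' (eq_zero_of_critical_relations hpos hij hil hjl hcrit hj_lt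
      (show v * a m + 0 * a l = _ by rw [hv]; ring))
  · obtain rfl := eq_third hij hil hjl hmi hmj
    have hle : criticalMultiplier a m ≤ v := criticalMultiplier_le hv_pos <| by
      rw [mul_comm, ← hv]
      exact mul_mem_spanOthers hjl _
    refine hu_pos.ne' (eq_zero_of_critical_relations (f := v - criticalMultiplier a m)
      hpos hij hil hjl hcrit hj_lt ?_)
    zify [hle] at hu hv ⊢
    linear_combination -hu - hv

theorem exists_criticalIndivisible_of_relation {p q s t : ℕ} (hmin : MinimalGens a) (hij : i ≠ j)
    (hil : i ≠ l) (hjl : j ≠ l) (hcrit : q * a j + p * a l = criticalMultiplier a i * a i)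
    (hs : 0 < s) (hsq : s < q) (hrel : a i + s * a j = t * a l) :
    (CriticalIndivisible a l ∧ criticalMultiplier a l ≤ t) ∨
      (CriticalIndivisible a j ∧ criticalMultiplier a j ≤ s) := by
  by_cases hl : CriticalIndivisible a l
  · refine .inl ⟨hl, criticalMultiplier_le (Nat.pos_of_ne_zero fun h0 => ?_)
      ((mem_spanOthers_iff hil.symm hjl.symm hij).2 ⟨1, s, by rw [one_mul, hrel]⟩)⟩
    have := hmin.pos i
    rw [h0] at hrel
    omega
  · simp only [CriticalIndivisible, not_forall, not_not] at hl
    obtain ⟨m, hml, hdvd⟩ := hl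
    obtain rfl | hmi := eq_or_ne m i
    · exact .inr (criticalIndivisible_of_dvd_critical hmin.pos hij hil hjl hcrit hs hsq hrel hdvd)
    · obtain rfl := eq_third hil hij hjl.symm hmi hml
      exact absurd hrel (add_mul_ne_mul_of_dvd_critical hmin hij hil hjl hdvd s t)

-- Subtracting the critical relation of `a i` from the factorization `w` gives a relation
-- `a i + s * a j = t * a l`, and then `a l` or `a j` has a smaller critical multiple.
theorem exists_criticalIndivisible_lt {w : Fin 3 → ℕ} (hmin : MinimalGens a)
    (hi : CriticalIndivisible a i) (hw : w ∈ Zfac a ((criticalMultiplier a i + 1) * a i))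
    (hwi : w i = 0) (hsupp : ∀ j ≠ i, w j ≠ 0) :
    ∃ m, CriticalIndivisible a m ∧
      (criticalMultiplier a m + 1) * a m < (criticalMultiplier a i + 1) * a i := by
  obtain ⟨t, hti⟩ := exists_ne i
  obtain ⟨-, z, hzi, hz⟩ := criticalMultiplier_spec hti (hmin.pos t)
  obtain ⟨j, hji, hlt⟩ := hmin.exists_ne_lt hz hw hzi hwi
  obtain ⟨l, hjl, hil⟩ := exists_third hji
  have hz_sum : z j * a j + z l * a l = criticalMultiplier a i * a i := by
    rw [← mem_Zfac.1 hz, sum_eq_add_add hji.symm hil hjl, hzi, zero_mul, zero_add]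
  have hw_sum : w j * a j + w l * a l = (criticalMultiplier a i + 1) * a i := by
    rw [← mem_Zfac.1 hw, sum_eq_add_add hji.symm hil hjl, hwi, zero_mul, zero_add]
  have hi_pos := hmin.pos i
  have hwj_pos := Nat.pos_of_ne_zero (hsupp j hji)
  have hzl_pos := Nat.pos_of_ne_zero (hi.ne_zero hz hzi hil.symm)
  have hzl_le : z l ≤ w l := by
    by_contra! hwl
    nlinarith [Nat.mul_le_mul_right (a j) hlt.le, Nat.mul_le_mul_right (a l) hwl.le]
  have hrel : a i + (z j - w j) * a j = (w l - z l) * a l := by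
    zify [hlt.le, hzl_le] at hz_sum hw_sum ⊢
    linear_combination hz_sum - hw_sum
  rcases exists_criticalIndivisible_of_relation hmin hji.symm hil hjl hz_sum (by omega) (by omega)
    hrel with ⟨hl, hle⟩ | ⟨hj, hle⟩
  · refine ⟨l, hl, ?_⟩
    have := Nat.mul_le_mul_right (a l) (show criticalMultiplier a l + 1 ≤ w l by omega)
    have := Nat.mul_pos hwj_pos (hmin.pos j)
    omega
  · refine ⟨j, hj, ?_⟩
    have := Nat.mul_le_mul_right (a j) (show criticalMultiplier a j + 1 ≤ z j by omega)
    rw [add_one_mul (criticalMultiplier a i)]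
    omega

theorem two_mem_DeltaZeroS (hgcd : univ.gcd a = 1) (hmin : MinimalGens a)
    (hunique : ∀ i j : Fin 3, IsGluingAt a i → IsGluingAt a j → i = j) : 2 ∈ DeltaZeroS a := by
  classical
  obtain ⟨i, hi, hleast⟩ := exists_min_image (univ.filter (CriticalIndivisible a))
    (fun i => (criticalMultiplier a i + 1) * a i)
    (by simpa [Finset.Nonempty] using exists_criticalIndivisible hgcd hmin hunique)
  simp only [mem_filter, mem_univ, true_and] at hi hleast
  refine two_mem_DeltaZeroS_of_criticalIndivisible hmin.pos hi fun w hw hwi => ?_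
  by_contra! hsupp
  obtain ⟨m, hm, hlt⟩ := exists_criticalIndivisible_lt hmin hi hw hwi hsupp
  exact (hleast m hm).not_gt hlt

end ThreeGenerators

/-- For a numerical semigroup with three minimal generators: if `S` admits at most one
expression as a gluing then `Δ₀(S) = {1, 2}`, and if it admits at least two distinct
expressions as a gluing then `Δ₀(S) = {1}`. -/
theorem stmt_17 (a : Fin 3 → ℕ)
    (hgcd : Finset.univ.gcd a = 1)
    (hmin : MinimalGens a) :
    ((∀ i j : Fin 3, IsGluingAt a i → IsGluingAt a j → i = j) →
      DeltaZeroS a = {1, 2}) ∧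
    ((∃ i j : Fin 3, i ≠ j ∧ IsGluingAt a i ∧ IsGluingAt a j) →
      DeltaZeroS a = {1}) := by
  have hmem : ∀ {d}, d ∈ DeltaZeroS a → d = 1 ∨ d = 2 := fun hd => by
    have := DeltaZeroS_subset_Ioo hmin.pos hd
    rw [Set.mem_Ioo] at this
    omega
  have hone : 1 ∈ DeltaZeroS a := one_mem_DeltaZeroS zero_ne_one (hmin.pos 0) (hmin.pos 1)
  constructor
  · intro hunique
    have htwo := two_mem_DeltaZeroS hgcd hmin hunique
    exact Set.Subset.antisymm (fun _ hd => hmem hd) (Set.pair_subset hone htwo)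
  · rintro ⟨i, j, hij, hi, hj⟩
    have htwo : 2 ∉ DeltaZeroS a := pred_notMem_DeltaZeroS (by norm_num) hmin.pos hgcd hij
      (hi.gcdOthers_mul_mem_spanOthers hgcd) (hj.gcdOthers_mul_mem_spanOthers hgcd)
    refine Set.Subset.antisymm (fun d hd => ?_) (Set.singleton_subset_iff.2 hone)
    exact (hmem hd).resolve_right fun h => htwo (h ▸ hd)
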